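/- Let n ∈ ℕ and α a partition of n. Let a_(α) = ∏_{μ<α} a_μ, b_(α) = ∏_{μ<α} b_μ, and a^(α), b^(α) the complementary products over μ ≥ α. Then the Cartan matrix C_(α) associated to the basic set {χ^λ : λ < α} on classes < α and the Cartan matrix C^(α) for {χ^λ : λ ≥ α} on classes ≥ α satisfy det C_(α) = b_(α)/a_(α) = a^(α)/b^(α) = det C^(α). -/

import Mathlib

open scoped Classical

namespace SnTable

variable {n : ℕ}

/-- The parts of a partition, listed in weakly decreasing order. -/
def descList (μ : Nat.Partition n) : List ℕ := (μ.parts.sort (· ≤ ·)).reverse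

/-- Strict lexicographic order on partitions of `n` (comparing the lists of parts
written in decreasing order). -/
def plex (μ ν : Nat.Partition n) : Prop := List.Lex (· < ·) (descList μ) (descList ν)

/-- Weak lexicographic order on partitions of `n`. -/
def plexLE (μ ν : Nat.Partition n) : Prop := μ = ν ∨ plex μ ν

/-- `a_μ = ∏ i^{m_i(μ)}`, the product of the parts of `μ`. -/
def aNum (μ : Nat.Partition n) : ℕ := μ.parts.prod

/-- `b_μ = ∏ m_i(μ)!`, the product of the factorials of the multiplicities. -/
def bNum (μ : Nat.Partition n) : ℕ :=
  ∏ i ∈ μ.parts.toFinset, (μ.parts.count i).factorial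

/-- `z_μ = a_μ b_μ`, the centralizer order of an element of cycle type `μ` in `S_n`. -/
def zNum (μ : Nat.Partition n) : ℕ := aNum μ * bNum μ

/-- The cycle type of a permutation of `Fin n`, as a partition of `n`. -/
def cycleTypePartition (g : Equiv.Perm (Fin n)) : Nat.Partition n :=
  (Fintype.card_fin n) ▸ g.partition

/-- The value at `g` of the permutation character `ξ^λ` of `S_n` obtained by inducing the
trivial character from the Young subgroup `S_λ`: it counts the ordered set partitions of
`Fin n` with block sizes `λ₁ ≥ λ₂ ≥ …` that are fixed by `g`. -/
def permChar (lam : Nat.Partition n) (g : Equiv.Perm (Fin n)) : ℕ :=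
  Fintype.card {f : Fin n → Fin (descList lam).length //
    (∀ x, f (g x) = f x) ∧
    ∀ j, (Finset.univ.filter fun x => f x = j).card = (descList lam).get j}

/-- `X` is the character table of the symmetric group `S_n`, with rows and columns indexed
by the partitions of `n`: each row is an irreducible character (as a class function, via
cycle types), distinct rows are distinct characters, and the labelling is the standard one,
pinned down by the fact that the transition matrix expressing the Young permutation
characters `ξ^λ` in terms of the rows of `X` is unitriangular with respect to the
lexicographic order. -/
def IsCharTable (X : Nat.Partition n → Nat.Partition n → ℤ) : Prop :=
  (∀ lam : Nat.Partition n, ∃ V : FDRep ℂ (Equiv.Perm (Fin n)),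
      CategoryTheory.Simple V ∧
      ∀ g : Equiv.Perm (Fin n), V.character g = (X lam (cycleTypePartition g) : ℂ)) ∧
  (∃ d : Nat.Partition n → Nat.Partition n → ℤ,
      (∀ lam, d lam lam = 1) ∧
      (∀ lam mu, d lam mu ≠ 0 → plexLE lam mu) ∧
      (∀ lam (g : Equiv.Perm (Fin n)),
        (permChar lam g : ℤ) = ∑ mu, d lam mu * X mu (cycleTypePartition g))) ∧
  Function.Injective X

/-!
Write `M = d X`, where `M` is the table of the Young permutation characters and `d` is the
unitriangular transition matrix of `IsCharTable`. A set partition with block sizes `λ` fixed by `g`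
sorts the cycles of `g` into blocks, so `M` is lower triangular for the lexicographic order, and its
diagonal entry at `μ` is `b_μ`.

Let `p` be a set of partitions and `X_p` the block of `X` with rows and columns in `p`. If `p` is an
upper set, then `M_p = d_p X_p`, so `det X_p = ∏ b_μ`. If `p` is a lower set, row orthogonality
`X Z⁻¹ Xᵀ = 1` with `Z = diag(z_μ)` gives `X (Z⁻¹ Mᵀ) = dᵀ`, where `Z⁻¹ Mᵀ` is upper triangular with
diagonal entries `b_μ / z_μ = 1 / a_μ`; hence `X_p (Z⁻¹ Mᵀ)_p = (dᵀ)_p` and `det X_p = ∏ a_μ`.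

Column orthogonality `Xᵀ X = Z` turns `X_{·p} = D X_p` into `X_pᵀ (Dᵀ D) X_p = Z_p`, so
`det (Dᵀ D) (det X_p)² = ∏ a_μ b_μ`. The set of all partitions is both an upper and a lower set,
whence `∏ a_μ = ∏ b_μ` over all of them.
-/

section Matrix

open Matrix

variable {l m s R : Type*} [CommRing R]

theorem det_transpose_mul_self_mul_det_sq [Fintype l] [Fintype s] [DecidableEq m] [DecidableEq s]
    {A : Matrix l m R} {z : m → R} (hA : Aᵀ * A = diagonal z) {f : s → m}
    (hf : Function.Injective f) {D : Matrix l s R} {B : Matrix s s R}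
    (hD : D * B = A.submatrix id f) :
    (Dᵀ * D).det * B.det ^ 2 = ∏ i, z (f i) := by
  have hgram : Bᵀ * (Dᵀ * D) * B = diagonal (z ∘ f) := by
    calc Bᵀ * (Dᵀ * D) * B = (D * B)ᵀ * (D * B) := by
          simp only [transpose_mul, Matrix.mul_assoc]
      _ = (Aᵀ * A).submatrix f f := by
          rw [hD, transpose_submatrix, submatrix_mul _ _ f id f Function.bijective_id]
      _ = diagonal (z ∘ f) := by rw [hA, submatrix_diagonal _ _ hf]
  have hdet := congrArg det hgram
  simp only [det_mul _ B, det_mul Bᵀ, det_transpose, det_diagonal, Function.comp_apply] at hdet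
  rw [← hdet]
  ring

variable [Fintype m]

theorem toSquareBlockProp_mul_of_isUpperSet [LinearOrder m] {p : m → Prop} [DecidablePred p]
    (hp : IsUpperSet {i | p i}) {U : Matrix m m R} (hU : U.IsUpperTriangular) (A : Matrix m m R) :
    (U * A).toSquareBlockProp p = U.toSquareBlockProp p * A.toSquareBlockProp p := by
  have hzero : (U.toBlock p fun i => ¬ p i) = 0 := by
    ext i j
    exact hU (not_le.1 fun hij => j.2 (hp hij i.2))
  simp only [toSquareBlockProp, toBlock_mul_eq_add p p p, hzero, Matrix.zero_mul, add_zero]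

theorem toSquareBlockProp_mul_of_isLowerSet [LinearOrder m] {p : m → Prop} [DecidablePred p]
    (hp : IsLowerSet {i | p i}) (A : Matrix m m R) {U : Matrix m m R} (hU : U.IsUpperTriangular) :
    (A * U).toSquareBlockProp p = A.toSquareBlockProp p * U.toSquareBlockProp p := by
  have hzero : U.toBlock (fun i => ¬ p i) p = 0 := by
    ext i j
    exact hU (not_le.1 fun hij => i.2 (hp hij j.2))
  simp only [toSquareBlockProp, toBlock_mul_eq_add p p p, hzero, Matrix.mul_zero, add_zero]

variable [DecidableEq m]

theorem det_toSquareBlockProp_of_isUpperTriangular [LinearOrder m] {U : Matrix m m R}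
    (hU : U.IsUpperTriangular) (p : m → Prop) [DecidablePred p] :
    (U.toSquareBlockProp p).det = ∏ i : {i // p i}, U i i :=
  det_of_isUpperTriangular (hU.submatrix (f := Subtype.val))

theorem det_toSquareBlockProp_of_isLowerTriangular [LinearOrder m] {L : Matrix m m R}
    (hL : L.IsLowerTriangular) (p : m → Prop) [DecidablePred p] :
    (L.toSquareBlockProp p).det = ∏ i : {i // p i}, L i i :=
  det_of_isLowerTriangular _ (hL.submatrix (f := Subtype.val))

end Matrix

section Lexicographic

theorem sort_ge_eq_cons_erase {β : Type*} [LinearOrder β] {s : Multiset β} (hs : s ≠ 0) :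
    ∃ m ∈ s, (∀ x ∈ s, x ≤ m) ∧ s.sort (· ≥ ·) = m :: (s.erase m).sort (· ≥ ·) := by
  obtain ⟨m, hm, hmax⟩ := s.toFinset.exists_max_image id (by simpa using hs)
  rw [Multiset.mem_toFinset] at hm
  have hmax' : ∀ x ∈ s, x ≤ m := fun x hx => hmax x (Multiset.mem_toFinset.2 hx)
  refine ⟨m, hm, hmax', ?_⟩
  rw [← Multiset.sort_cons _ _ _ fun x hx => hmax' x (Multiset.mem_of_mem_erase hx),
    Multiset.cons_erase hm]

theorem eq_singleton_of_sum_le {s : Multiset ℕ} (hs : 0 ∉ s) {m : ℕ} (hm : m ∈ s)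
    (hsum : s.sum ≤ m) : s = {m} := by
  obtain ⟨t, rfl⟩ := Multiset.exists_cons_of_mem hm
  rw [Multiset.sum_cons, add_le_iff_nonpos_right, Nat.le_zero, Multiset.sum_eq_zero_iff] at hsum
  rw [Multiset.eq_zero_of_forall_notMem (s := t) fun x hx =>
    hs (hsum x hx ▸ Multiset.mem_cons_of_mem hx), Multiset.cons_zero]

-- Compare the largest entries: they agree only if the block containing the largest part is a
-- singleton, and then that block can be removed from both sides.
theorem sort_join_le_sort_map_sum (P : Multiset (Multiset ℕ)) (hP : ∀ p ∈ P, 0 ∉ p) :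
    P.join.sort (· ≥ ·) ≤ (P.map Multiset.sum).sort (· ≥ ·) := by
  induction P using Multiset.strongInductionOn with | ih P ih =>
  rcases eq_or_ne P.join 0 with hjoin | hjoin
  · rw [hjoin, Multiset.sort_zero]
    exact not_lt.1 (List.not_lt_nil _)
  obtain ⟨m, hm, -, hsortm⟩ := sort_ge_eq_cons_erase hjoin
  obtain ⟨p, hp, hmp⟩ := Multiset.mem_join.1 hm
  obtain ⟨P', rfl⟩ := Multiset.exists_cons_of_mem hp
  obtain ⟨M, -, hMmax, hsortM⟩ := sort_ge_eq_cons_erase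
    (s := (p ::ₘ P').map Multiset.sum) (by simp)
  have hpM : p.sum ≤ M := hMmax _ (Multiset.mem_map_of_mem _ hp)
  have hmM : m ≤ M := (Multiset.single_le_sum (fun _ _ => Nat.zero_le _) m hmp).trans hpM
  rw [hsortm, hsortM]
  rcases hmM.lt_or_eq with hlt | rfl
  · exact le_of_lt (List.Lex.rel hlt)
  · obtain rfl := eq_singleton_of_sum_le (hP p hp) hmp hpM
    have hle := ih P' (Multiset.lt_cons_self _ _) fun q hq => hP q (Multiset.mem_cons_of_mem hq)
    simp only [Multiset.join_cons, Multiset.singleton_add, Multiset.erase_cons_head,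
      Multiset.map_cons, Multiset.sum_singleton]
    rcases hle.lt_or_eq with hlt | heq
    · exact le_of_lt (List.Lex.cons hlt)
    · rw [heq]

variable {O J : Type*} [Fintype O] [Fintype J] [DecidableEq J]

theorem sort_map_le_sort_map_of_sum_fiber_eq {sz : O → ℕ} {w : J → ℕ} (hsz : ∀ o, sz o ≠ 0)
    {h : O → J} (hh : ∀ j, ∑ o with h o = j, sz o = w j) :
    (Finset.univ.val.map sz).sort (· ≥ ·) ≤ (Finset.univ.val.map w).sort (· ≥ ·) := by
  let fiberSizes (j : J) : Multiset ℕ := (Finset.univ.filter fun o => h o = j).val.map sz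
  have hjoin : (Finset.univ.val.map fiberSizes).join = Finset.univ.val.map sz := by
    have sum_singleton (s : Finset O) : ∑ o ∈ s, ({sz o} : Multiset ℕ) = s.val.map sz := by
      rw [← Multiset.sum_map_singleton (s.val.map sz), Multiset.map_map]
      rfl
    calc ∑ j, fiberSizes j = ∑ j, ∑ o with h o = j, {sz o} :=
          Finset.sum_congr rfl fun j _ => (sum_singleton _).symm
      _ = ∑ o, {sz o} := Finset.sum_fiberwise Finset.univ h _
      _ = Finset.univ.val.map sz := sum_singleton _
  have hmap : (Finset.univ.val.map fiberSizes).map Multiset.sum = Finset.univ.val.map w := by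
    rw [Multiset.map_map]
    exact Multiset.map_congr rfl fun j _ => hh j
  rw [← hjoin, ← hmap]
  refine sort_join_le_sort_map_sum _ fun p hp h0 => ?_
  obtain ⟨j, -, rfl⟩ := Multiset.mem_map.1 hp
  obtain ⟨o, -, ho⟩ := Multiset.mem_map.1 h0
  exact hsz o ho

end Lexicographic

section FiberCount

variable {O J : Type*} [Fintype O] [Fintype J]

theorem exists_equiv_comp_eq_of_map_univ_eq {β : Type*} {f : O → β} {g : J → β}
    (hfg : Finset.univ.val.map f = Finset.univ.val.map g) : ∃ e : O ≃ J, g ∘ e = f := by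
  have hfiber (b : β) : Fintype.card {o // f o = b} = Fintype.card {j // g j = b} := by
    simpa only [Multiset.count_map, Fintype.card_subtype, Finset.card_def, Finset.filter_val,
      eq_comm (a := b)] using congrArg (Multiset.count b) hfg
  exact ⟨Equiv.ofFiberEquiv fun b => Fintype.equivOfCardEq (hfiber b),
    funext fun o => Equiv.ofFiberEquiv_map _ o⟩

variable [DecidableEq J]

theorem sum_fiber_eq_iff_bijective_and_comp_eq {sz : O → ℕ} {w : J → ℕ} (hw : ∀ j, w j ≠ 0)
    (hcard : Fintype.card O = Fintype.card J) (h : O → J) :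
    (∀ j, ∑ o with h o = j, sz o = w j) ↔ Function.Bijective h ∧ w ∘ h = sz := by
  have sum_fiber (hinj : Function.Injective h) (o : O) : ∑ o' with h o' = h o, sz o' = sz o := by
    rw [Finset.sum_eq_single_of_mem o (by simp) fun o' ho' hne =>
      absurd (hinj (Finset.mem_filter.1 ho').2) hne]
  constructor
  · intro hh
    have hsurj : Function.Surjective h := fun j => by
      obtain ⟨o, ho, -⟩ := Finset.exists_ne_zero_of_sum_ne_zero ((hh j).trans_ne (hw j))
      exact ⟨o, (Finset.mem_filter.1 ho).2⟩
    have hbij := (Fintype.bijective_iff_surjective_and_card h).2 ⟨hsurj, hcard⟩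
    exact ⟨hbij, funext fun o => (hh (h o)).symm.trans (sum_fiber hbij.injective o)⟩
  · rintro ⟨hbij, rfl⟩ j
    obtain ⟨o, rfl⟩ := hbij.surjective j
    exact sum_fiber hbij.injective o

theorem card_sum_fiber_eq {sz : O → ℕ} {w : J → ℕ} (hw : ∀ j, w j ≠ 0)
    (hmap : Finset.univ.val.map sz = Finset.univ.val.map w) :
    Fintype.card {h : O → J // ∀ j, ∑ o with h o = j, sz o = w j} =
      ∏ i ∈ (Finset.univ.val.map w).toFinset, ((Finset.univ.val.map w).count i).factorial := by
  obtain ⟨e, he⟩ := exists_equiv_comp_eq_of_map_univ_eq hmap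
  have hiff := sum_fiber_eq_iff_bijective_and_comp_eq (sz := sz) hw (Fintype.card_congr e)
  have hcard : Fintype.card {σ : Equiv.Perm J // w ∘ σ = w} =
      Fintype.card {h : O → J // ∀ j, ∑ o with h o = j, sz o = w j} := by
    refine Fintype.card_of_bijective (f := fun σ => ⟨σ.1 ∘ e, (hiff _).2
      ⟨σ.1.bijective.comp e.bijective, by rw [← Function.comp_assoc, σ.2, he]⟩⟩) ⟨?_, ?_⟩
    · intro σ τ hστ
      exact Subtype.ext (DFunLike.coe_injective
        (e.surjective.injective_comp_right (congrArg Subtype.val hστ)))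
    · rintro ⟨h, hh⟩
      obtain ⟨hbij, hcomp⟩ := (hiff h).1 hh
      refine ⟨⟨e.symm.trans (Equiv.ofBijective h hbij), ?_⟩, ?_⟩
      · rw [Equiv.coe_trans, Equiv.coe_ofBijective, ← Function.comp_assoc, hcomp, ← he,
          Function.comp_assoc, Equiv.self_comp_symm, Function.comp_id]
      · ext o
        simp
  rw [← hcard, DomMulAct.stabilizer_card']
  refine Finset.prod_congr rfl fun i _ => ?_
  simp only [Multiset.count_map, Fintype.card_subtype, Finset.card_def, Finset.filter_val,
    eq_comm (a := i)]

end FiberCount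

section Orbits

variable {α : Type*}

/-- The cycles of a permutation `g`, fixed points included: the orbits of the group it generates. -/
abbrev Orbits (g : Equiv.Perm α) : Type _ := Quotient (Equiv.Perm.SameCycle.setoid g)

theorem forall_apply_eq_iff_setoid_le_ker {β : Type*} {g : Equiv.Perm α} {f : α → β} :
    (∀ x, f (g x) = f x) ↔ Equiv.Perm.SameCycle.setoid g ≤ Setoid.ker f := by
  constructor
  · rintro hf x - ⟨i, rfl⟩
    induction i with
    | zero => exact congrArg f (Equiv.Perm.congr_fun (zpow_zero g).symm x)
    | succ i ih =>
      rw [add_comm, zpow_one_add]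
      exact ih.trans (hf _).symm
    | pred i ih =>
      refine ih.trans ?_
      rw [← hf ((g ^ (-(i : ℤ) - 1)) x), ← Equiv.Perm.mul_apply, ← zpow_one_add, add_sub_cancel]
  · exact fun hf x => (hf (Equiv.Perm.sameCycle_apply_right.2 (.refl g x))).symm

variable [Fintype α]

/-- The length of a cycle of `g`; fixed points have length `1`. -/
noncomputable def orbitSize (g : Equiv.Perm α) (o : Orbits g) : ℕ :=
  (Finset.univ.filter fun x : α => (Quotient.mk _ x : Orbits g) = o).card

theorem orbitSize_ne_zero (g : Equiv.Perm α) (o : Orbits g) : orbitSize g o ≠ 0 := by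
  induction o using Quotient.inductionOn with | h x =>
  exact Finset.card_ne_zero.2 ⟨x, by simp⟩

theorem sum_orbitSize_filter (g : Equiv.Perm α) (p : Orbits g → Prop) [DecidablePred p] :
    ∑ o with p o, orbitSize g o = (Finset.univ.filter fun x => p (Quotient.mk _ x)).card := by
  rw [Finset.card_eq_sum_card_fiberwise (f := fun x => (Quotient.mk _ x : Orbits g))
    (t := Finset.univ.filter p) (by intro x; simp)]
  refine Finset.sum_congr rfl fun o ho => congrArg Finset.card ?_
  ext x
  simp only [Finset.mem_filter, Finset.mem_univ, true_and] at ho ⊢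
  exact ⟨fun h => ⟨h ▸ ho, h⟩, fun h => h.2⟩

theorem orbitSize_mk [DecidableEq α] {g : Equiv.Perm α} {x : α} (hx : g x ≠ x) :
    orbitSize g (Quotient.mk _ x) = (g.cycleOf x).support.card := by
  refine congrArg Finset.card ?_
  ext y
  simp [Equiv.Perm.mem_support_cycleOf_iff' hx, Quotient.eq, Equiv.Perm.SameCycle.setoid,
    Equiv.Perm.sameCycle_comm]

theorem two_le_orbitSize_mk {g : Equiv.Perm α} {x : α} :
    2 ≤ orbitSize g (Quotient.mk _ x) ↔ g x ≠ x := by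
  classical
  refine ⟨fun h hx => ?_, fun hx => ?_⟩
  · obtain ⟨y, hy, hyx⟩ := Finset.exists_mem_ne h x
    have hxy : g.SameCycle x y := (Quotient.exact (Finset.mem_filter.1 hy).2).symm
    exact hyx (hxy.eq_of_left hx).symm
  · exact orbitSize_mk hx ▸ Equiv.Perm.two_le_card_support_cycleOf_iff.2 hx

theorem filter_map_orbitSize [DecidableEq α] (g : Equiv.Perm α) :
    (Finset.univ.val.map (orbitSize g)).filter (2 ≤ ·) = g.cycleType := by
  rw [Multiset.filter_map, Equiv.Perm.cycleType_def]
  let orbitCycle : Orbits g → Equiv.Perm α :=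
    Quotient.lift g.cycleOf fun _ _ h => Equiv.Perm.SameCycle.cycleOf_eq h
  have mem_iff (x : α) : (Quotient.mk _ x : Orbits g) ∈ Finset.univ.val.filter
      ((2 ≤ ·) ∘ orbitSize g) ↔ g x ≠ x := by
    simp only [Multiset.mem_filter, Finset.mem_val, Finset.mem_univ, true_and,
      Function.comp_apply, two_le_orbitSize_mk]
  refine Multiset.map_eq_map_of_bij_of_nodup _ _ (Finset.univ.filter _).nodup
    g.cycleFactorsFinset.nodup (fun o _ => orbitCycle o) ?_ ?_ ?_ ?_
  · rintro ⟨x⟩ hx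
    exact Equiv.Perm.cycleOf_mem_cycleFactorsFinset_iff.2
      (Equiv.Perm.mem_support.2 ((mem_iff x).1 hx))
  · rintro ⟨x⟩ hx ⟨y⟩ hy hxy
    exact Quotient.sound ((Equiv.Perm.sameCycle_iff_cycleOf_eq_of_mem_support
      (Equiv.Perm.mem_support.2 ((mem_iff x).1 hx))
      (Equiv.Perm.mem_support.2 ((mem_iff y).1 hy))).2 hxy)
  · intro c hc
    obtain ⟨x, hx⟩ := (Equiv.Perm.mem_cycleFactorsFinset_iff.1 hc).1.nonempty_support
    have hgx := Equiv.Perm.mem_support.1 (Equiv.Perm.mem_cycleFactorsFinset_support_le hc hx)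
    exact ⟨Quotient.mk _ x, (mem_iff x).2 hgx, (Equiv.Perm.cycle_is_cycleOf hx hc).symm⟩
  · rintro ⟨x⟩ hx
    exact orbitSize_mk ((mem_iff x).1 hx)

end Orbits

section CycleType

theorem eq_filter_two_le_add_replicate_one {s : Multiset ℕ} (hs : 0 ∉ s) :
    s = s.filter (2 ≤ ·) + Multiset.replicate (s.sum - (s.filter (2 ≤ ·)).sum) 1 := by
  have hones : s.filter (¬ 2 ≤ ·) = Multiset.replicate (s.filter (¬ 2 ≤ ·)).card 1 := by
    refine Multiset.eq_replicate.2 ⟨rfl, fun b hb => ?_⟩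
    obtain ⟨hbs, hb2⟩ := Multiset.mem_filter.1 hb
    have hb0 : b ≠ 0 := ne_of_mem_of_not_mem hbs hs
    lia
  have hsplit := Multiset.filter_add_not (2 ≤ ·) s
  have hcard : s.sum - (s.filter (2 ≤ ·)).sum = (s.filter (¬ 2 ≤ ·)).card := by
    rw [← congrArg Multiset.sum hsplit, Multiset.sum_add, Nat.add_sub_cancel_left, hones,
      Multiset.sum_replicate, smul_eq_mul, mul_one, ← hones]
  rw [hcard, ← hones, hsplit]

theorem eq_of_filter_two_le_eq {s t : Multiset ℕ} (hs : 0 ∉ s) (ht : 0 ∉ t)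
    (hsum : s.sum = t.sum) (hst : s.filter (2 ≤ ·) = t.filter (2 ≤ ·)) : s = t := by
  rw [eq_filter_two_le_add_replicate_one hs, eq_filter_two_le_add_replicate_one ht, hsum, hst]

theorem prod_factorial_count_add {β : Type*} [DecidableEq β] {s t : Multiset β}
    (hst : Disjoint s t) :
    ∏ i ∈ (s + t).toFinset, ((s + t).count i).factorial =
      (∏ i ∈ s.toFinset, (s.count i).factorial) * ∏ i ∈ t.toFinset, (t.count i).factorial := by
  rw [Multiset.toFinset_add, Finset.prod_union (Multiset.disjoint_toFinset.2 hst)]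
  congr 1 <;> refine Finset.prod_congr rfl fun i hi => ?_
  · rw [Multiset.count_add, Multiset.count_eq_zero_of_notMem
      (Multiset.disjoint_left.1 hst (Multiset.mem_toFinset.1 hi)), add_zero]
  · rw [Multiset.count_add, Multiset.count_eq_zero_of_notMem
      (Multiset.disjoint_right.1 hst (Multiset.mem_toFinset.1 hi)), zero_add]

theorem prod_factorial_count_replicate {β : Type*} [DecidableEq β] (k : ℕ) (a : β) :
    ∏ i ∈ (Multiset.replicate k a).toFinset, ((Multiset.replicate k a).count i).factorial =
      k.factorial := by
  rcases eq_or_ne k 0 with rfl | hk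
  · rfl
  · rw [Multiset.toFinset_replicate, if_neg hk, Finset.prod_singleton,
      Multiset.count_replicate_self]

theorem zero_notMem_parts (μ : n.Partition) : 0 ∉ μ.parts :=
  fun h => (μ.parts_pos h).ne rfl

theorem aNum_pos (μ : n.Partition) : 0 < aNum μ :=
  Multiset.prod_pos fun _ => μ.parts_pos

theorem bNum_pos (μ : n.Partition) : 0 < bNum μ :=
  Finset.prod_pos fun _ _ => Nat.factorial_pos _

theorem zNum_pos (μ : n.Partition) : 0 < zNum μ :=
  mul_pos (aNum_pos μ) (bNum_pos μ)

theorem parts_cycleTypePartition (g : Equiv.Perm (Fin n)) :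
    (cycleTypePartition g).parts = g.partition.parts := by
  have parts_cast {k : ℕ} (h : k = n) (μ : k.Partition) : (h ▸ μ).parts = μ.parts := by
    subst h
    rfl
  exact parts_cast _ _

theorem filter_two_le_parts_cycleTypePartition (g : Equiv.Perm (Fin n)) :
    (cycleTypePartition g).parts.filter (2 ≤ ·) = g.cycleType := by
  rw [parts_cycleTypePartition, Equiv.Perm.filter_parts_partition_eq_cycleType]

theorem cycleTypePartition_eq_iff {g : Equiv.Perm (Fin n)} {μ : n.Partition} :
    cycleTypePartition g = μ ↔ g.cycleType = μ.parts.filter (2 ≤ ·) := by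
  rw [← filter_two_le_parts_cycleTypePartition]
  refine ⟨fun h => h ▸ rfl, fun h => Nat.Partition.ext ?_⟩
  exact eq_of_filter_two_le_eq (zero_notMem_parts _) (zero_notMem_parts _)
    ((cycleTypePartition g).parts_sum.trans μ.parts_sum.symm) h

theorem cycleTypePartition_inv (g : Equiv.Perm (Fin n)) :
    cycleTypePartition g⁻¹ = cycleTypePartition g := by
  rw [cycleTypePartition_eq_iff, Equiv.Perm.cycleType_inv, ← cycleTypePartition_eq_iff]

theorem map_orbitSize (g : Equiv.Perm (Fin n)) :
    Finset.univ.val.map (orbitSize g) = (cycleTypePartition g).parts := by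
  refine eq_of_filter_two_le_eq (fun h => ?_) (zero_notMem_parts _) ?_ ?_
  · obtain ⟨o, -, ho⟩ := Multiset.mem_map.1 h
    exact orbitSize_ne_zero g o ho
  · have hsum := sum_orbitSize_filter g fun _ => True
    rw [Finset.filter_true, Finset.filter_true, Finset.card_fin] at hsum
    exact hsum.trans (cycleTypePartition g).parts_sum.symm
  · rw [filter_map_orbitSize, filter_two_le_parts_cycleTypePartition]

theorem zNum_eq_filter_two_le (μ : n.Partition) :
    zNum μ = (n - (μ.parts.filter (2 ≤ ·)).sum).factorial * (μ.parts.filter (2 ≤ ·)).prod *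
      ∏ i ∈ (μ.parts.filter (2 ≤ ·)).toFinset,
        ((μ.parts.filter (2 ≤ ·)).count i).factorial := by
  have hparts := eq_filter_two_le_add_replicate_one (zero_notMem_parts μ)
  rw [μ.parts_sum] at hparts
  have hdisj : Disjoint (μ.parts.filter (2 ≤ ·))
      (Multiset.replicate (n - (μ.parts.filter (2 ≤ ·)).sum) 1) :=
    Multiset.disjoint_left.2 fun hi hi1 =>
      absurd (Multiset.mem_filter.1 hi).2 (by simp [Multiset.eq_of_mem_replicate hi1])
  have ha : aNum μ = (μ.parts.filter (2 ≤ ·)).prod := by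
    conv_lhs => rw [aNum, hparts]
    rw [Multiset.prod_add, Multiset.prod_replicate, one_pow, mul_one]
  have hb : bNum μ = (∏ i ∈ (μ.parts.filter (2 ≤ ·)).toFinset,
      ((μ.parts.filter (2 ≤ ·)).count i).factorial) *
        (n - (μ.parts.filter (2 ≤ ·)).sum).factorial := by
    conv_lhs => rw [bNum, hparts]
    rw [prod_factorial_count_add hdisj, prod_factorial_count_replicate]
  rw [zNum, ha, hb]
  ring

theorem card_filter_cycleTypePartition_mul_zNum (μ : n.Partition) :
    (Finset.univ.filter fun g => cycleTypePartition g = μ).card * zNum μ = n.factorial := by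
  have hle : (μ.parts.filter (2 ≤ ·)).sum ≤ n :=
    (Nat.le_add_right _ _).trans_eq (by
      rw [← Multiset.sum_add, Multiset.filter_add_not, μ.parts_sum])
  have hcard := Equiv.Perm.card_of_cycleType_mul_eq (Fin n) (μ.parts.filter (2 ≤ ·))
  rw [Fintype.card_fin, if_pos ⟨hle, fun _ hi => (Multiset.mem_filter.1 hi).2⟩] at hcard
  simpa only [cycleTypePartition_eq_iff, zNum_eq_filter_two_le] using hcard

theorem cycleTypePartition_surjective :
    Function.Surjective (cycleTypePartition : Equiv.Perm (Fin n) → n.Partition) := fun μ => by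
  have hcard := card_filter_cycleTypePartition_mul_zNum μ
  obtain ⟨g, hg⟩ := Finset.card_ne_zero.1
    (left_ne_zero_of_mul (hcard.trans_ne n.factorial_ne_zero))
  exact ⟨g, (Finset.mem_filter.1 hg).2⟩

theorem sum_cycleTypePartition {K : Type*} [Field K] [CharZero K] (f : n.Partition → K) :
    ∑ g : Equiv.Perm (Fin n), f (cycleTypePartition g) =
      n.factorial * ∑ μ : n.Partition, f μ / zNum μ := by
  rw [← Finset.sum_fiberwise Finset.univ cycleTypePartition, Finset.mul_sum]
  refine Finset.sum_congr rfl fun μ _ => ?_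
  have hz : (zNum μ : K) ≠ 0 := Nat.cast_ne_zero.2 (zNum_pos μ).ne'
  rw [Finset.sum_congr rfl fun g hg => congrArg f (Finset.mem_filter.1 hg).2, Finset.sum_const,
    nsmul_eq_mul, ← card_filter_cycleTypePartition_mul_zNum μ]
  push_cast
  field_simp

end CycleType

section PermutationCharacter

theorem descList_eq_sort (μ : n.Partition) : descList μ = μ.parts.sort (· ≥ ·) := by
  refine List.Perm.eq_of_pairwise (le := (· ≥ ·)) (fun _ _ _ _ hab hba => le_antisymm hba hab)
    (List.pairwise_reverse.2 (Multiset.pairwise_sort _ _)) (Multiset.pairwise_sort _ _) ?_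
  rw [← Multiset.coe_eq_coe, descList, Multiset.coe_reverse, Multiset.sort_eq, Multiset.sort_eq]

theorem coe_descList (μ : n.Partition) : (descList μ : Multiset ℕ) = μ.parts := by
  rw [descList_eq_sort, Multiset.sort_eq]

theorem descList_injective : Function.Injective (descList (n := n)) := fun μ ν h =>
  Nat.Partition.ext (by rw [← coe_descList, h, coe_descList])

theorem map_get_descList (μ : n.Partition) :
    Finset.univ.val.map (descList μ).get = μ.parts := by
  rw [Fin.univ_val_map, List.ofFn_get, coe_descList]

theorem get_descList_ne_zero (μ : n.Partition) (j : Fin (descList μ).length) :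
    (descList μ).get j ≠ 0 := by
  refine ne_of_mem_of_not_mem ?_ (zero_notMem_parts μ)
  rw [← coe_descList]
  exact List.get_mem _ _

/-- The lexicographic order `plexLE` as a linear order on partitions. It is not an instance:
`Nat.Partition` has no canonical order. -/
noncomputable abbrev lexOrder (n : ℕ) : LinearOrder n.Partition :=
  LinearOrder.lift' descList descList_injective

theorem plexLE_iff_le {μ ν : n.Partition} : plexLE μ ν ↔ (lexOrder n).le μ ν :=
  (@le_iff_eq_or_lt _ (lexOrder n).toPartialOrder μ ν).symm

theorem permChar_eq_card_orbits (lam : n.Partition) (g : Equiv.Perm (Fin n)) :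
    permChar lam g = Fintype.card {h : Orbits g → Fin (descList lam).length //
      ∀ j, ∑ o with h o = j, orbitSize g o = (descList lam).get j} := by
  refine (Fintype.card_congr (Equiv.trans ?_ (Equiv.subtypeSubtypeEquivSubtypeInter _ _))).symm
  refine ((Setoid.liftEquiv _).symm.trans
    (Equiv.subtypeEquivRight fun f => forall_apply_eq_iff_setoid_le_ker.symm)).subtypeEquiv
    fun h => ?_
  simp only [sum_orbitSize_filter]
  rfl

theorem plexLE_of_permChar_ne_zero {lam : n.Partition} {g : Equiv.Perm (Fin n)}
    (hg : permChar lam g ≠ 0) : plexLE (cycleTypePartition g) lam := by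
  rw [permChar_eq_card_orbits] at hg
  obtain ⟨h, hh⟩ := Fintype.card_pos_iff.1 (Nat.pos_of_ne_zero hg)
  have hle := sort_map_le_sort_map_of_sum_fiber_eq (orbitSize_ne_zero g) hh
  rw [map_orbitSize, map_get_descList, ← descList_eq_sort, ← descList_eq_sort] at hle
  exact plexLE_iff_le.2 hle

theorem permChar_cycleTypePartition (g : Equiv.Perm (Fin n)) :
    permChar (cycleTypePartition g) g = bNum (cycleTypePartition g) := by
  have hcard := card_sum_fiber_eq (get_descList_ne_zero (cycleTypePartition g))
    ((map_orbitSize g).trans (map_get_descList _).symm)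
  rw [map_get_descList] at hcard
  rw [permChar_eq_card_orbits, bNum]
  convert hcard

end PermutationCharacter

section CharacterTable

open Matrix

variable {X : n.Partition → n.Partition → ℤ}

/-- A table `X` of integers indexed by partitions, as a matrix over `ℚ`. -/
def ratTable (X : n.Partition → n.Partition → ℤ) : Matrix n.Partition n.Partition ℚ :=
  Matrix.of fun lam μ => X lam μ

/-- The table of the Young permutation characters: the entry at `(λ, μ)` is the value of `ξ^λ` at
a chosen permutation of cycle type `μ`. -/
noncomputable def permCharTable (n : ℕ) : Matrix n.Partition n.Partition ℚ :=
  Matrix.of fun lam μ => permChar lam (Function.surjInv cycleTypePartition_surjective μ)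

theorem permCharTable_apply_self (μ : n.Partition) : permCharTable n μ μ = bNum μ := by
  have hg := Function.surjInv_eq cycleTypePartition_surjective μ
  have hdiag := permChar_cycleTypePartition (Function.surjInv cycleTypePartition_surjective μ)
  rw [hg] at hdiag
  exact congrArg Nat.cast hdiag

theorem IsCharTable.sum_mul_div_zNum (hX : IsCharTable X) (κ lam : n.Partition) :
    ∑ μ, (X κ μ : ℚ) * X lam μ / zNum μ = if κ = lam then 1 else 0 := by
  obtain ⟨hV, -, hinj⟩ := hX
  choose V hsimple hchar using hV
  have iso_iff : Nonempty (V κ ≅ V lam) ↔ κ = lam := by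
    refine ⟨fun ⟨e⟩ => hinj (funext fun μ => ?_), fun h => h ▸ ⟨CategoryTheory.Iso.refl _⟩⟩
    obtain ⟨g, rfl⟩ := cycleTypePartition_surjective μ
    have hg := congrFun (FDRep.char_iso e) g
    rw [hchar, hchar] at hg
    exact_mod_cast hg
  have : Invertible (Nat.card (Equiv.Perm (Fin n)) : ℂ) := invertibleOfNonzero (by simp)
  have horth := FDRep.char_orthonormal (V κ) (V lam)
  simp only [hchar, cycleTypePartition_inv, iso_iff] at horth
  rw [sum_cycleTypePartition fun μ => (X κ μ : ℂ) * X lam μ, Nat.card_perm, Nat.card_fin,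
    inv_mul_cancel_left₀ (Nat.cast_ne_zero.2 n.factorial_ne_zero)] at horth
  refine Rat.cast_injective (α := ℂ) ?_
  push_cast
  rw [horth]
  split_ifs <;> norm_num

theorem IsCharTable.mul_diagonal_mul_transpose (hX : IsCharTable X) :
    ratTable X * diagonal (fun μ => (zNum μ : ℚ)⁻¹) * (ratTable X)ᵀ = 1 := by
  ext κ lam
  rw [mul_apply, one_apply, ← hX.sum_mul_div_zNum]
  refine Finset.sum_congr rfl fun μ _ => ?_
  rw [mul_diagonal, transpose_apply]
  exact mul_right_comm _ _ _

theorem IsCharTable.transpose_mul_self (hX : IsCharTable X) :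
    (ratTable X)ᵀ * ratTable X = diagonal fun μ => (zNum μ : ℚ) := by
  have hz : diagonal (fun μ : n.Partition => (zNum μ : ℚ)) *
      diagonal (fun μ => (zNum μ : ℚ)⁻¹) = 1 := by
    rw [diagonal_mul_diagonal, ← diagonal_one]
    exact congrArg diagonal (funext fun μ => mul_inv_cancel₀ (Nat.cast_ne_zero.2 (zNum_pos μ).ne'))
  have hcol : diagonal (fun μ => (zNum μ : ℚ)⁻¹) * ((ratTable X)ᵀ * ratTable X) = 1 := by
    rw [← Matrix.mul_assoc, mul_eq_one_comm, ← Matrix.mul_assoc, hX.mul_diagonal_mul_transpose]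
  rw [← Matrix.one_mul ((ratTable X)ᵀ * ratTable X), ← hz, Matrix.mul_assoc, hcol, Matrix.mul_one]

theorem IsCharTable.det_cartan_mul_det_sq (hX : IsCharTable X) (p : n.Partition → Prop)
    [DecidablePred p] {D : Matrix n.Partition {κ // p κ} ℤ}
    (hD : ∀ lam (μ : {μ // p μ}), X lam μ = ∑ κ, D lam κ * X κ μ) :
    ((Dᵀ * D).det : ℚ) * ((ratTable X).toSquareBlockProp p).det ^ 2 =
      ∏ μ : {μ // p μ}, (zNum μ.1 : ℚ) := by
  let DQ : Matrix n.Partition {κ // p κ} ℚ := D.map Int.cast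
  have hmul : DQ * (ratTable X).toSquareBlockProp p = (ratTable X).submatrix id Subtype.val := by
    ext lam μ
    refine Eq.trans ?_ (congrArg Int.cast (hD lam μ).symm)
    push_cast
    rfl
  have hgram : (Dᵀ * D).map (Int.cast : ℤ → ℚ) = DQᵀ * DQ :=
    Matrix.map_mul (f := Int.castRingHom ℚ)
  rw [← det_transpose_mul_self_mul_det_sq hX.transpose_mul_self Subtype.val_injective hmul,
    ← hgram, Int.cast_det]

theorem prod_aNum_ne_zero (p : n.Partition → Prop) [DecidablePred p] :
    ∏ μ : {μ // p μ}, (aNum μ.1 : ℚ) ≠ 0 :=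
  Finset.prod_ne_zero_iff.2 fun μ _ => Nat.cast_ne_zero.2 (aNum_pos μ.1).ne'

theorem prod_bNum_ne_zero (p : n.Partition → Prop) [DecidablePred p] :
    ∏ μ : {μ // p μ}, (bNum μ.1 : ℚ) ≠ 0 :=
  Finset.prod_ne_zero_iff.2 fun μ _ => Nat.cast_ne_zero.2 (bNum_pos μ.1).ne'

theorem prod_zNum (p : n.Partition → Prop) [DecidablePred p] :
    ∏ μ : {μ // p μ}, (zNum μ.1 : ℚ) =
      (∏ μ : {μ // p μ}, (aNum μ.1 : ℚ)) * ∏ μ : {μ // p μ}, (bNum μ.1 : ℚ) := by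
  simp only [zNum, Nat.cast_mul, Finset.prod_mul_distrib]

section LexOrder

attribute [local instance] lexOrder

theorem plexLE_iff_not_plex {μ ν : n.Partition} : plexLE μ ν ↔ ¬ plex ν μ :=
  plexLE_iff_le.trans not_lt.symm

theorem isLowerSet_plex (α : n.Partition) : IsLowerSet {μ | plex μ α} :=
  isLowerSet_Iio α

theorem isUpperSet_plexLE (α : n.Partition) : IsUpperSet {μ | plexLE α μ} := fun _ _ hμν hμ =>
  plexLE_iff_le.2 ((plexLE_iff_le.1 hμ).trans hμν)

theorem permCharTable_isLowerTriangular (n : ℕ) : (permCharTable n).IsLowerTriangular := by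
  intro lam μ hlt
  by_contra hne
  have hle := plexLE_iff_le.1 (plexLE_of_permChar_ne_zero (Nat.cast_ne_zero.1 hne))
  rw [Function.surjInv_eq cycleTypePartition_surjective] at hle
  exact hle.not_gt hlt

theorem IsCharTable.exists_unitriangular (hX : IsCharTable X) :
    ∃ d : Matrix n.Partition n.Partition ℚ, d.IsUpperTriangular ∧ (∀ lam, d lam lam = 1) ∧
      d * ratTable X = permCharTable n := by
  obtain ⟨-, ⟨d, hdiag, hupper, hd⟩, -⟩ := hX
  refine ⟨of fun lam μ => d lam μ, fun lam μ hlt => ?_, fun lam => by simp [hdiag], ?_⟩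
  · by_contra hne
    exact (plexLE_iff_le.1 (hupper lam μ (Int.cast_ne_zero.1 hne))).not_gt hlt
  · ext lam μ
    have hval := hd lam (Function.surjInv cycleTypePartition_surjective μ)
    rw [Function.surjInv_eq cycleTypePartition_surjective] at hval
    have hvalQ := congrArg (Int.cast : ℤ → ℚ) hval.symm
    push_cast at hvalQ
    exact hvalQ

variable {p : n.Partition → Prop} [DecidablePred p]

theorem IsCharTable.det_of_isUpperSet (hX : IsCharTable X) (hp : IsUpperSet {μ | p μ}) :
    ((ratTable X).toSquareBlockProp p).det = ∏ μ : {μ // p μ}, (bNum μ.1 : ℚ) := by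
  obtain ⟨d, hd, hdiag, hmul⟩ := hX.exists_unitriangular
  have hblock := congrArg det (toSquareBlockProp_mul_of_isUpperSet hp hd (ratTable X))
  rw [hmul, det_mul, det_toSquareBlockProp_of_isUpperTriangular hd,
    det_toSquareBlockProp_of_isLowerTriangular (permCharTable_isLowerTriangular n)] at hblock
  simpa only [hdiag, permCharTable_apply_self, Finset.prod_const_one, one_mul] using hblock.symm

theorem IsCharTable.det_of_isLowerSet (hX : IsCharTable X) (hp : IsLowerSet {μ | p μ}) :
    ((ratTable X).toSquareBlockProp p).det = ∏ μ : {μ // p μ}, (aNum μ.1 : ℚ) := by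
  obtain ⟨d, hd, hdiag, hmul⟩ := hX.exists_unitriangular
  set U := diagonal (fun μ => (zNum μ : ℚ)⁻¹) * (permCharTable n)ᵀ with hU
  have hUupper : U.IsUpperTriangular :=
    (blockTriangular_diagonal _).mul (permCharTable_isLowerTriangular n).transpose
  have hUdiag (μ : n.Partition) : U μ μ = (aNum μ : ℚ)⁻¹ := by
    have hb : (bNum μ : ℚ) ≠ 0 := Nat.cast_ne_zero.2 (bNum_pos μ).ne'
    rw [hU, diagonal_mul, transpose_apply, permCharTable_apply_self, zNum, Nat.cast_mul]
    field_simp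
  have hXU : ratTable X * U = dᵀ := by
    rw [hU, ← hmul, transpose_mul, ← Matrix.mul_assoc, ← Matrix.mul_assoc,
      hX.mul_diagonal_mul_transpose, Matrix.one_mul]
  have hblock := congrArg det (toSquareBlockProp_mul_of_isLowerSet hp (ratTable X) hUupper)
  rw [hXU, det_mul, det_toSquareBlockProp_of_isUpperTriangular hUupper,
    det_toSquareBlockProp_of_isLowerTriangular hd.transpose] at hblock
  simp only [transpose_apply, hdiag, hUdiag, Finset.prod_const_one, Finset.prod_inv_distrib]
    at hblock
  exact eq_of_mul_inv_eq_one hblock.symm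

theorem IsCharTable.det_cartan_of_isLowerSet (hX : IsCharTable X) (hp : IsLowerSet {μ | p μ})
    {D : Matrix n.Partition {κ // p κ} ℤ}
    (hD : ∀ lam (μ : {μ // p μ}), X lam μ = ∑ κ, D lam κ * X κ μ) :
    ((Dᵀ * D).det : ℚ) =
      (∏ μ : {μ // p μ}, (bNum μ.1 : ℚ)) / ∏ μ : {μ // p μ}, (aNum μ.1 : ℚ) := by
  have ha := prod_aNum_ne_zero p
  have hdet := hX.det_cartan_mul_det_sq p hD
  rw [hX.det_of_isLowerSet hp, prod_zNum, sq, ← mul_assoc, mul_comm _ (∏ _, _ : ℚ)] at hdet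
  exact eq_div_of_mul_eq ha (mul_left_cancel₀ ha hdet)

theorem IsCharTable.det_cartan_of_isUpperSet (hX : IsCharTable X) (hp : IsUpperSet {μ | p μ})
    {D : Matrix n.Partition {κ // p κ} ℤ}
    (hD : ∀ lam (μ : {μ // p μ}), X lam μ = ∑ κ, D lam κ * X κ μ) :
    ((Dᵀ * D).det : ℚ) =
      (∏ μ : {μ // p μ}, (aNum μ.1 : ℚ)) / ∏ μ : {μ // p μ}, (bNum μ.1 : ℚ) := by
  have hb := prod_bNum_ne_zero p
  have hdet := hX.det_cartan_mul_det_sq p hD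
  rw [hX.det_of_isUpperSet hp, prod_zNum, sq, ← mul_assoc] at hdet
  exact eq_div_of_mul_eq hb (mul_right_cancel₀ hb hdet)

theorem IsCharTable.prod_aNum_eq_prod_bNum (hX : IsCharTable X) :
    ∏ μ : n.Partition, (aNum μ : ℚ) = ∏ μ : n.Partition, (bNum μ : ℚ) := by
  have hdet := (hX.det_of_isLowerSet (p := fun _ => True) isLowerSet_univ).symm.trans
    (hX.det_of_isUpperSet isUpperSet_univ)
  let e := Equiv.subtypeUnivEquiv (p := fun _ : n.Partition => True) fun _ => trivial
  exact (e.prod_comp _).symm.trans (hdet.trans (e.prod_comp fun μ => (bNum μ : ℚ)))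

end LexOrder

theorem prod_plex_mul_prod_plexLE {K : Type*} [CommMonoid K] (α : n.Partition)
    (f : n.Partition → K) :
    (∏ μ : {μ // plex μ α}, f μ) * ∏ μ : {μ // plexLE α μ}, f μ = ∏ μ, f μ := by
  rw [← Fintype.prod_subtype_mul_prod_subtype (plex · α)]
  congr 1
  exact (Equiv.subtypeEquivRight fun _ => plexLE_iff_not_plex).prod_comp fun μ => f μ.1

theorem IsCharTable.prod_bNum_div_prod_aNum (hX : IsCharTable X) (α : n.Partition) :
    (∏ μ : {μ // plex μ α}, (bNum μ.1 : ℚ)) / ∏ μ : {μ // plex μ α}, (aNum μ.1 : ℚ) =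
      (∏ μ : {μ // plexLE α μ}, (aNum μ.1 : ℚ)) / ∏ μ : {μ // plexLE α μ}, (bNum μ.1 : ℚ) := by
  rw [div_eq_div_iff (prod_aNum_ne_zero _) (prod_bNum_ne_zero _),
    prod_plex_mul_prod_plexLE α fun μ => (bNum μ : ℚ),
    mul_comm (∏ _ : {μ // plexLE α μ}, _), prod_plex_mul_prod_plexLE α fun μ => (aNum μ : ℚ),
    hX.prod_aNum_eq_prod_bNum]

end CharacterTable

/-- **Theorem 3.6.** Let `α` be a partition of `n`, `a_(α) = ∏_{μ<α} a_μ`,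
`b_(α) = ∏_{μ<α} b_μ`, and `a^(α), b^(α)` the complementary products over `μ ≥ α`.  Let `C_(α)`
(resp. `C^(α)`) be the Cartan matrix `DᵀD` of the basic set `{χ^λ : λ < α}` on the classes `< α`
(resp. of `{χ^λ : λ ≥ α}` on the classes `≥ α`), where `D` is the integral decomposition matrix
expressing all character restrictions in terms of the basic set.  Then
`det C_(α) = b_(α)/a_(α) = a^(α)/b^(α) = det C^(α)`. -/
theorem Cartan_det_small_and_large (n : ℕ) (X : Nat.Partition n → Nat.Partition n → ℤ)
    (hX : IsCharTable X) (α : Nat.Partition n)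
    (D : Nat.Partition n → {κ : Nat.Partition n // plex κ α} → ℤ)
    (hD : ∀ (lam : Nat.Partition n) (μ : {μ : Nat.Partition n // plex μ α}),
      X lam μ.1 = ∑ κ : {κ : Nat.Partition n // plex κ α}, D lam κ * X κ.1 μ.1)
    (D' : Nat.Partition n → {κ : Nat.Partition n // plexLE α κ} → ℤ)
    (hD' : ∀ (lam : Nat.Partition n) (μ : {μ : Nat.Partition n // plexLE α μ}),
      X lam μ.1 = ∑ κ : {κ : Nat.Partition n // plexLE α κ}, D' lam κ * X κ.1 μ.1)
    (C : Matrix {κ : Nat.Partition n // plex κ α} {κ : Nat.Partition n // plex κ α} ℤ)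
    (hC : C = Matrix.of fun κ κ' => ∑ lam : Nat.Partition n, D lam κ * D lam κ')
    (C' : Matrix {κ : Nat.Partition n // plexLE α κ} {κ : Nat.Partition n // plexLE α κ} ℤ)
    (hC' : C' = Matrix.of fun κ κ' => ∑ lam : Nat.Partition n, D' lam κ * D' lam κ') :
    (C.det : ℚ) = (∏ μ : {μ : Nat.Partition n // plex μ α}, (bNum μ.1 : ℚ)) /
        (∏ μ : {μ : Nat.Partition n // plex μ α}, (aNum μ.1 : ℚ)) ∧
    (∏ μ : {μ : Nat.Partition n // plex μ α}, (bNum μ.1 : ℚ)) /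
        (∏ μ : {μ : Nat.Partition n // plex μ α}, (aNum μ.1 : ℚ)) =
      (∏ μ : {μ : Nat.Partition n // plexLE α μ}, (aNum μ.1 : ℚ)) /
        (∏ μ : {μ : Nat.Partition n // plexLE α μ}, (bNum μ.1 : ℚ)) ∧
    (C'.det : ℚ) = (∏ μ : {μ : Nat.Partition n // plexLE α μ}, (aNum μ.1 : ℚ)) /
        (∏ μ : {μ : Nat.Partition n // plexLE α μ}, (bNum μ.1 : ℚ)) := by
  refine ⟨?_, hX.prod_bNum_div_prod_aNum α, ?_⟩
  · rw [hC]
    exact hX.det_cartan_of_isLowerSet (isLowerSet_plex α) hD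
  · rw [hC']
    exact hX.det_cartan_of_isUpperSet (isUpperSet_plexLE α) hD'

end SnTable
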